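/- The optimal inspection time lies in the set $\{T_j - 1 : j = 1, \dots, N\} \cup \{T^*\}$ (Proposition 4). Let $C_{insp} : \mathbb{N} \to \mathbb{R}$ be strictly antitone, let $N \ge 1$, let $T : \mathrm{Fin}\, N \to \mathbb{N}$ be strictly monotone with $0 < T_i < T^*$ for all $i$, let $n : \mathrm{Fin}\, N \to \mathbb{N}$ and $C_{rep}, C_{out} : \mathbb{N} \to \mathbb{R}$, and define $F(s) = C_{insp}(s) + \sum_{i : T_i \le s} \big(n_i\, C_{rep}(T_i) + C_{out}(T_i)\big)$. Then for every natural $s$ with $1 \le s \le T^*$ there exists $s'$ with $1 \le s' \le T^*$, $s' \in \{T_j - 1 : j \in \mathrm{Fin}\, N\} \cup \{T^*\}$, and $F(s') \le F(s)$. -/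

import Mathlib

open Finset

/-!
Postponing an inspection to just before the next deadline, or to the horizon if no deadline
intervenes, incurs no further repair or out-of-service cost and can only lower the inspection cost.
-/

section InspectionTime

variable {ι α M : Type*} [LinearOrder α] [AddCommMonoid M] [Preorder M] [AddRightMono M]

/-- The total cost of inspecting at time `s` when the repairs `i ∈ I` have deadlines `T i`.
The charge `c i` combines the repair and out-of-service costs incurred at deadline `T i`. -/
def totalCost (Cinsp : α → M) (I : Finset ι) (T : ι → α) (c : ι → M) (s : α) : M :=
  Cinsp s + ∑ i ∈ I with T i ≤ s, c i

theorem totalCost_le_of_no_new_deadline {Cinsp : α → M} {I : Finset ι} {T : ι → α}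
    (c : ι → M) {s s' : α} (hC : Cinsp s' ≤ Cinsp s)
    (hnew : ∀ i ∈ I, T i ≤ s' ↔ T i ≤ s) :
    totalCost Cinsp I T c s' ≤ totalCost Cinsp I T c s := by
  rw [totalCost, totalCost, filter_congr hnew]
  gcongr

theorem exists_pred_deadline_or_horizon_no_new_deadline [PredOrder α] (I : Finset ι) (T : ι → α)
    {s t : α} (hst : s ≤ t) :
    ∃ s' ∈ Set.Icc s t, ((∃ j ∈ I, s' = Order.pred (T j)) ∨ s' = t) ∧
      ∀ i ∈ I, T i ≤ s' ↔ T i ≤ s := by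
  by_cases hnext : {i ∈ I | s < T i ∧ T i ≤ t}.Nonempty
  · obtain ⟨j, hj, hjmin⟩ := exists_min_image _ T hnext
    obtain ⟨hjI, hsj, hjt⟩ := mem_filter.mp hj
    have hs_pred : s ≤ Order.pred (T j) := Order.le_pred_of_lt hsj
    have hpred_lt : Order.pred (T j) < T j := Order.pred_lt_of_not_isMin hsj.not_isMin
    refine ⟨Order.pred (T j), ⟨hs_pred, hpred_lt.le.trans hjt⟩, .inl ⟨j, hjI, rfl⟩,
      fun i hi => ⟨fun hi_pred => ?_, fun his => his.trans hs_pred⟩⟩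
    by_contra! hsi
    have hi_lt : T i < T j := hi_pred.trans_lt hpred_lt
    exact (hjmin i (mem_filter.mpr ⟨hi, hsi, hi_lt.le.trans hjt⟩)).not_gt hi_lt
  · refine ⟨t, ⟨hst, le_rfl⟩, .inr rfl, fun i hi => ⟨fun hit => ?_, fun his => his.trans hst⟩⟩
    by_contra! hsi
    exact hnext ⟨i, mem_filter.mpr ⟨hi, hsi, hit⟩⟩

theorem optimal_inspection_at_deadline_minus_one_or_horizon_general [PredOrder α]
    {Cinsp : α → M} {s t : α} (hCinsp : AntitoneOn Cinsp (Set.Icc s t)) (hst : s ≤ t)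
    (I : Finset ι) (T : ι → α) (c : ι → M) :
    ∃ s' ∈ Set.Icc s t, ((∃ j ∈ I, s' = Order.pred (T j)) ∨ s' = t) ∧
      totalCost Cinsp I T c s' ≤ totalCost Cinsp I T c s := by
  obtain ⟨s', hs', hcand, hnew⟩ := exists_pred_deadline_or_horizon_no_new_deadline I T hst
  have hC : Cinsp s' ≤ Cinsp s := hCinsp (Set.left_mem_Icc.mpr hst) hs' hs'.1
  exact ⟨s', hs', hcand, totalCost_le_of_no_new_deadline c hC hnew⟩

end InspectionTime

/-- Proposition 4: for every candidate inspection time `s ∈ {1, …, T*}` there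
is an inspection time `s'` in `{T j - 1 : j = 1, …, N} ∪ {T*}` with total cost
at most that of `s`; hence the optimal inspection time lies in that set. -/
theorem optimal_inspection_at_deadline_minus_one_or_horizon
    (Cinsp : ℕ → ℝ) (hCinsp : StrictAnti Cinsp)
    (N : ℕ) (hN : 1 ≤ N) (Tstar : ℕ)
    (T : Fin N → ℕ) (hT : StrictMono T)
    (hTpos : ∀ i : Fin N, 0 < T i) (hTlt : ∀ i : Fin N, T i < Tstar)
    (n : Fin N → ℕ) (Crep Cout : ℕ → ℝ) (F : ℕ → ℝ)
    (hF : ∀ s : ℕ, F s = Cinsp s +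
      ∑ i ∈ Finset.univ.filter (fun i : Fin N => T i ≤ s),
        ((n i : ℝ) * Crep (T i) + Cout (T i))) :
    ∀ s : ℕ, 1 ≤ s → s ≤ Tstar →
      ∃ s' : ℕ, 1 ≤ s' ∧ s' ≤ Tstar ∧
        ((∃ j : Fin N, s' = T j - 1) ∨ s' = Tstar) ∧ F s' ≤ F s := by
  intro s hs hsT
  obtain ⟨s', ⟨hss', hs'T⟩, hcand, hcost⟩ :=
    optimal_inspection_at_deadline_minus_one_or_horizon_general (hCinsp.antitone.antitoneOn _) hsT
      univ T (fun i => (n i : ℝ) * Crep (T i) + Cout (T i))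
  exact ⟨s', hs.trans hss', hs'T, by simpa using hcand,
    by simpa only [hF, totalCost] using hcost⟩
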